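/- arXiv:2303.08368 — 5 statements merged into one kernel-verified Lean document; each statement's English description precedes it below -/
import Mathlib

section
/- For every integer K ≥ 1, all real phases ε_1,…,ε_K, and every k ∈ {1,…,K}, the vector E(ε_1,…,ε_K) ∈ ℂ^{K+1} is orthogonal to the steering vector of the k-th source: a(ε_k)^† E(ε_1,…,ε_K) = 0. -/
open scoped BigOperators

/-- Steering vector `a(ε) ∈ ℂ^{n+1}` with entries `exp(j·i·ε)`, `i = 0,…,n`. -/
noncomputable def steer (n : ℕ) (ε : ℝ) : Fin (n + 1) → ℂ :=
  fun i => Complex.exp (Complex.I * ((i : ℕ) : ℂ) * (ε : ℂ))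

/-- The vector `E(η_1,…,η_m) ∈ ℂ^{m+1}` defined recursively by
`E(η_1) = (1, −exp(j·η_1))` and
`E(η_1,…,η_p) = (E(η_1,…,η_{p−1}), 0) − exp(j·η_p)·(0, E(η_1,…,η_{p−1}))`
(with base case `E() = (1)`, which reproduces the stated base case at `m = 1`). -/
noncomputable def Evec : (m : ℕ) → (Fin m → ℝ) → (Fin (m + 1) → ℂ)
  | 0, _ => fun _ => 1
  | m + 1, η => fun i =>
      Fin.snoc (α := fun _ => ℂ) (Evec m fun j => η j.castSucc) 0 i -
        Complex.exp (Complex.I * (η (Fin.last m) : ℂ)) *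
          Fin.cons (α := fun _ => ℂ) 0 (Evec m fun j => η j.castSucc) i

/-- The cyclic down-shift matrix on `ℂ^{n+1}`: `(Lv)_0 = v_n`, `(Lv)_i = v_{i−1}` for `i ≥ 1`. -/
def Lmat (n : ℕ) : Matrix (Fin (n + 1)) (Fin (n + 1)) ℂ :=
  Matrix.of fun i l => if l = i - 1 then 1 else 0

/-- Kronecker product of vectors: `(v ⊗ w)_{(i,l)} = v_i · w_l`. -/
def kron {a b : Type*} (v : a → ℂ) (w : b → ℂ) : a × b → ℂ :=
  fun p => v p.1 * w p.2

/-- `x^† y = Σ_i conj(x_i) · y_i`. -/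
noncomputable def ip {n : Type*} [Fintype n] (x y : n → ℂ) : ℂ :=
  ∑ i, (starRingEnd ℂ) (x i) * y i

/-- `x^† M y = Σ_{i,l} conj(x_i) · M_{i,l} · y_l`. -/
noncomputable def qf {n : Type*} [Fintype n] (x : n → ℂ) (M : Matrix n n ℂ) (y : n → ℂ) : ℂ :=
  ∑ i, ∑ l, (starRingEnd ℂ) (x i) * M i l * y l

/-- `E(η_1,…,η_Kp) ∈ ℂ^{Kp+1}` padded with a trailing zero, giving a vector in `ℂ^{Kp+2}`. -/
noncomputable def Epad (Kp : ℕ) (η : Fin Kp → ℝ) : Fin (Kp + 2) → ℂ :=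
  Fin.snoc (Evec Kp η) 0

/-- `u_0 = Ẽ_tx ⊗ Ẽ_rx`. -/
noncomputable def u0 (Kp : ℕ) (ηt ηr : Fin Kp → ℝ) : Fin (Kp + 2) × Fin (Kp + 2) → ℂ :=
  kron (Epad Kp ηt) (Epad Kp ηr)

/-- `u_1 = Ẽ_tx ⊗ (L·Ẽ_rx)`. -/
noncomputable def u1 (Kp : ℕ) (ηt ηr : Fin Kp → ℝ) : Fin (Kp + 2) × Fin (Kp + 2) → ℂ :=
  kron (Epad Kp ηt) ((Lmat (Kp + 1)).mulVec (Epad Kp ηr))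

/-- `u_2 = (L·Ẽ_tx) ⊗ Ẽ_rx`. -/
noncomputable def u2 (Kp : ℕ) (ηt ηr : Fin Kp → ℝ) : Fin (Kp + 2) × Fin (Kp + 2) → ℂ :=
  kron ((Lmat (Kp + 1)).mulVec (Epad Kp ηt)) (Epad Kp ηr)

/-- `u_3 = (L·Ẽ_tx) ⊗ (L·Ẽ_rx)`. -/
noncomputable def u3 (Kp : ℕ) (ηt ηr : Fin Kp → ℝ) : Fin (Kp + 2) × Fin (Kp + 2) → ℂ :=
  kron ((Lmat (Kp + 1)).mulVec (Epad Kp ηt)) ((Lmat (Kp + 1)).mulVec (Epad Kp ηr))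

/-- The noiseless auto-correlation matrix `R = Σ_{k=1}^K σ_k² A_k A_k^†`, where
`A_k = a(ε_tx,k) ⊗ a(ε_rx,k)` and `σsq k` is the power `σ_k²`. -/
noncomputable def Rmat (K : ℕ) (εtx εrx σsq : Fin K → ℝ) :
    Matrix (Fin (K + 1) × Fin (K + 1)) (Fin (K + 1) × Fin (K + 1)) ℂ :=
  Matrix.of fun p q => ∑ k, (σsq k : ℂ) *
    kron (steer K (εtx k)) (steer K (εrx k)) p *
    (starRingEnd ℂ) (kron (steer K (εtx k)) (steer K (εrx k)) q)

/-- The rank-one matrix `R_ε = a(ε) a(ε)^† ∈ ℂ^{(Kp+2)×(Kp+2)}`. -/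
noncomputable def Rsingle (Kp : ℕ) (ε : ℝ) : Matrix (Fin (Kp + 2)) (Fin (Kp + 2)) ℂ :=
  Matrix.of fun i l => steer (Kp + 1) ε i * (starRingEnd ℂ) (steer (Kp + 1) ε l)

/-- The iDEA cost `Q_tx(φ) = (u_1 − exp(j·φ)·u_3)^† R (u_1 − exp(j·φ)·u_3)`. -/
noncomputable def Qcost (Kp : ℕ) (εtx εrx σsq : Fin (Kp + 1) → ℝ)
    (ηt ηr : Fin Kp → ℝ) (φ : ℝ) : ℂ :=
  qf (u1 Kp ηt ηr - Complex.exp (Complex.I * (φ : ℂ)) • u3 Kp ηt ηr)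
    (Rmat (Kp + 1) εtx εrx σsq)
    (u1 Kp ηt ηr - Complex.exp (Complex.I * (φ : ℂ)) • u3 Kp ηt ηr)

/-- The closed-form value `4^{2K−1} · Σ_k σ_k² sin²((ε_tx,k − φ)/2) ∏_m sin²((ε_tx,k − ε̂_tx,m)/2)
∏_n sin²((ε_rx,k − ε̂_rx,n)/2)` (here `K = Kp + 1`, so `2K − 1 = 2·Kp + 1`). -/
noncomputable def Ssum (Kp : ℕ) (εtx εrx σsq : Fin (Kp + 1) → ℝ)
    (ηt ηr : Fin Kp → ℝ) (φ : ℝ) : ℝ :=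
  (4 : ℝ) ^ (2 * Kp + 1) * ∑ k, σsq k * Real.sin ((εtx k - φ) / 2) ^ 2 *
    (∏ m, Real.sin ((εtx k - ηt m) / 2) ^ 2) *
    (∏ n, Real.sin ((εrx k - ηr n) / 2) ^ 2)

/-- The `k = K` term of `Ssum`, i.e. the lower bound
`4^{2K−1} · σ_K² sin²((ε_tx,K − φ)/2) ∏_m sin²((ε_tx,K − ε̂_tx,m)/2) ∏_n sin²((ε_rx,K − ε̂_rx,n)/2)`. -/
noncomputable def Slb (Kp : ℕ) (εtx εrx σsq : Fin (Kp + 1) → ℝ)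
    (ηt ηr : Fin Kp → ℝ) (φ : ℝ) : ℝ :=
  (4 : ℝ) ^ (2 * Kp + 1) * σsq (Fin.last Kp) *
    Real.sin ((εtx (Fin.last Kp) - φ) / 2) ^ 2 *
    (∏ m, Real.sin ((εtx (Fin.last Kp) - ηt m) / 2) ^ 2) *
    (∏ n, Real.sin ((εrx (Fin.last Kp) - ηr n) / 2) ^ 2)

lemma ip_steer_Evec (m : ℕ) (x : ℝ) (η : Fin m → ℝ) :
    ip (steer m x) (Evec m η) =
      ∏ i, (1 - Complex.exp (Complex.I * (η i : ℂ)) * Complex.exp (-(Complex.I * (x : ℂ)))) := by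
  induction m with
  | zero => simp [ip, steer, Evec]
  | succ m ih =>
    rw [Fin.prod_univ_castSucc, ← ih (fun j => η j.castSucc)]
    have key : ∀ i : Fin (m + 1), (starRingEnd ℂ) (steer (m + 1) x i.succ) =
        Complex.exp (-(Complex.I * (x : ℂ))) * (starRingEnd ℂ) (steer m x i) := by
      intro i
      simp only [steer, ← Complex.exp_conj, ← Complex.exp_add]
      congr 1
      simp
      ring
    have key2 : ∀ i : Fin (m + 1), steer (m + 1) x i.castSucc = steer m x i := by
      intro i
      simp [steer]
    have h1 : ∑ i, (starRingEnd ℂ) (steer (m + 1) x i) *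
        Fin.snoc (α := fun _ => ℂ) (Evec m fun j => η j.castSucc) 0 i =
        ip (steer m x) (Evec m fun j => η j.castSucc) := by
      rw [Fin.sum_univ_castSucc]
      simp [ip, key2]
    have h2 : ∑ i, (starRingEnd ℂ) (steer (m + 1) x i) *
        Fin.cons (α := fun _ => ℂ) 0 (Evec m fun j => η j.castSucc) i =
        Complex.exp (-(Complex.I * (x : ℂ))) *
          ip (steer m x) (Evec m fun j => η j.castSucc) := by
      rw [Fin.sum_univ_succ]
      simp [ip, key, Finset.mul_sum, mul_assoc]
    have h3 : ip (steer (m + 1) x) (Evec (m + 1) η) =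
        ∑ i, (starRingEnd ℂ) (steer (m + 1) x i) *
          Fin.snoc (α := fun _ => ℂ) (Evec m fun j => η j.castSucc) 0 i -
        Complex.exp (Complex.I * (η (Fin.last m) : ℂ)) *
          ∑ i, (starRingEnd ℂ) (steer (m + 1) x i) *
            Fin.cons (α := fun _ => ℂ) 0 (Evec m fun j => η j.castSucc) i := by
      rw [Finset.mul_sum, ← Finset.sum_sub_distrib]
      unfold ip
      refine Finset.sum_congr rfl fun i _ => ?_
      rw [Evec]
      ring
    rw [h3, h1, h2]
    ring

/-- For every integer K ≥ 1, all real phases ε_1,…,ε_K, and every k,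
a(ε_k)^† E(ε_1,…,ε_K) = 0. -/
theorem statement2 (K : ℕ) (hK : 1 ≤ K) (ε : Fin K → ℝ) (k : Fin K) :
    ip (steer K (ε k)) (Evec K ε) = 0 := by
  rw [ip_steer_Evec]
  refine Finset.prod_eq_zero (Finset.mem_univ k) ?_
  rw [← Complex.exp_add]
  simp
end

section
/- (Theorem 1) Let E_tx = E(ε_tx,1,…,ε_tx,K) and E_rx = E(ε_rx,1,…,ε_rx,K), both in ℂ^{K+1}. Then A_k^† (E_tx ⊗ E_rx) = 0 for every k = 1,…,K, and consequently R · (E_tx ⊗ E_rx) = 0; that is, E_tx ⊗ E_rx is a non-signal (noise) subspace vector of the auto-correlation matrix R. -/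
open scoped BigOperators

/-- The generating polynomial of `Evec` factors as a product of linear terms. -/
theorem Evec_gen (z : ℂ) : ∀ (m : ℕ) (η : Fin m → ℝ),
    ∑ i : Fin (m + 1), z ^ (i : ℕ) * Evec m η i =
      ∏ l : Fin m, (1 - Complex.exp (Complex.I * (η l : ℂ)) * z)
  | 0, _ => by simp [Evec]
  | m + 1, η => by
      have ih := Evec_gen z m (fun l => η l.castSucc)
      rw [Fin.prod_univ_castSucc, ← ih]
      simp only [Evec, mul_sub, Finset.sum_sub_distrib]
      rw [Fin.sum_univ_castSucc]
      simp only [Fin.snoc_castSucc, Fin.snoc_last, Fin.val_castSucc, mul_zero, add_zero]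
      rw [mul_one]
      congr 1
      conv_lhs => rw [Fin.sum_univ_succ]
      simp only [Fin.cons_zero, Fin.cons_succ, Fin.val_succ, mul_zero, zero_add]
      rw [Finset.sum_mul]
      refine Finset.sum_congr rfl fun i _ => ?_
      ring

theorem ip_steer_Evec_s3 (K : ℕ) (η : Fin K → ℝ) (k : Fin K) :
    ip (steer K (η k)) (Evec K η) = 0 := by
  have h := Evec_gen (Complex.exp (-(Complex.I * (η k : ℂ)))) K η
  rw [Finset.prod_eq_zero (Finset.mem_univ k)
    (by rw [← Complex.exp_add, add_neg_cancel, Complex.exp_zero, sub_self])] at h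
  rw [← h, ip]
  refine Finset.sum_congr rfl fun i _ => ?_
  congr 1
  rw [steer, ← Complex.exp_conj, ← Complex.exp_nat_mul]
  congr 1
  simp
  ring

theorem ip_kron {a b : Type*} [Fintype a] [Fintype b] (v v' : a → ℂ) (w w' : b → ℂ) :
    ip (kron v w) (kron v' w') = ip v v' * ip w w' := by
  simp only [ip, kron, Fintype.sum_prod_type, Finset.sum_mul_sum, map_mul]
  refine Finset.sum_congr rfl fun i _ => Finset.sum_congr rfl fun l _ => ?_
  ring

/-- Theorem 1: A_k^† (E_tx ⊗ E_rx) = 0 for every k, and consequently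
R · (E_tx ⊗ E_rx) = 0. -/
theorem statement3 (K : ℕ) (hK : 2 ≤ K) (εtx εrx : Fin K → ℝ) (σsq : Fin K → ℝ)
    (hσ : ∀ k, 0 < σsq k) :
    (∀ k : Fin K,
        ip (kron (steer K (εtx k)) (steer K (εrx k)))
          (kron (Evec K εtx) (Evec K εrx)) = 0) ∧
    (Rmat K εtx εrx σsq).mulVec (kron (Evec K εtx) (Evec K εrx)) = 0 := by
  have h1 : ∀ k : Fin K,
      ip (kron (steer K (εtx k)) (steer K (εrx k)))
        (kron (Evec K εtx) (Evec K εrx)) = 0 := fun k => by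
    rw [ip_kron, ip_steer_Evec_s3, zero_mul]
  refine ⟨h1, ?_⟩
  funext p
  simp only [Matrix.mulVec, dotProduct, Rmat, Matrix.of_apply, Finset.sum_mul, Pi.zero_apply]
  rw [Finset.sum_comm]
  refine Finset.sum_eq_zero fun k _ => ?_
  have h := h1 k
  rw [ip] at h
  simp only [mul_assoc] at h ⊢
  rw [← Finset.mul_sum, ← Finset.mul_sum, h, mul_zero, mul_zero]
end

section
/- Let E_tx,K = E(ε_tx,1,…,ε_tx,K) and E_rx,K = E(ε_rx,1,…,ε_rx,K), both in ℂ^{K+1}. Then u_1 − exp(j·ε_tx,K)·u_3 = E_tx,K ⊗ (L·Ẽ_rx) and u_2 − exp(j·ε_rx,K)·u_3 = (L·Ẽ_tx) ⊗ E_rx,K. -/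
open scoped BigOperators

theorem Lmat_mulVec_Epad (Kp : ℕ) (η : Fin Kp → ℝ) :
    (Lmat (Kp + 1)).mulVec (Epad Kp η) = Fin.cons (α := fun _ => ℂ) 0 (Evec Kp η) := by
  have h : ∀ i, (Lmat (Kp + 1)).mulVec (Epad Kp η) i = Epad Kp η (i - 1) := by
    intro i
    simp [Lmat, Matrix.mulVec, dotProduct]
  funext i
  rw [h]
  refine Fin.cases ?_ (fun k => ?_) i
  · have : (0 - 1 : Fin (Kp + 2)) = Fin.last (Kp + 1) := by
      rw [sub_eq_iff_eq_add]
      simp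
    rw [this]
    simp [Epad]
  · have : (k.succ - 1 : Fin (Kp + 2)) = k.castSucc := by
      rw [sub_eq_iff_eq_add]
      simp
    rw [this, Fin.cons_succ]
    simp [Epad]

theorem Evec_succ_apply (Kp : ℕ) (ε : Fin (Kp + 1) → ℝ) (i : Fin (Kp + 2)) :
    Evec (Kp + 1) ε i = Epad Kp (fun i => ε i.castSucc) i -
      Complex.exp (Complex.I * (ε (Fin.last Kp) : ℂ)) *
        (Lmat (Kp + 1)).mulVec (Epad Kp (fun i => ε i.castSucc)) i := by
  rw [Lmat_mulVec_Epad]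
  rfl

/-- u_1 − exp(j·ε_tx,K)·u_3 = E_tx,K ⊗ (L·Ẽ_rx) and
u_2 − exp(j·ε_rx,K)·u_3 = (L·Ẽ_tx) ⊗ E_rx,K. -/
theorem statement5 (Kp : ℕ) (hKp : 1 ≤ Kp) (εtx εrx : Fin (Kp + 1) → ℝ) :
    u1 Kp (fun i => εtx i.castSucc) (fun i => εrx i.castSucc) - Complex.exp (Complex.I * (εtx (Fin.last Kp) : ℂ)) • u3 Kp (fun i => εtx i.castSucc) (fun i => εrx i.castSucc) =
      kron (Evec (Kp + 1) εtx) ((Lmat (Kp + 1)).mulVec (Epad Kp (fun i => εrx i.castSucc))) ∧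
    u2 Kp (fun i => εtx i.castSucc) (fun i => εrx i.castSucc) - Complex.exp (Complex.I * (εrx (Fin.last Kp) : ℂ)) • u3 Kp (fun i => εtx i.castSucc) (fun i => εrx i.castSucc) =
      kron ((Lmat (Kp + 1)).mulVec (Epad Kp (fun i => εtx i.castSucc))) (Evec (Kp + 1) εrx) := by
  constructor
  · funext p
    simp only [u1, u3, kron, Pi.sub_apply, Pi.smul_apply, smul_eq_mul, Evec_succ_apply]
    ring
  · funext p
    simp only [u2, u3, kron, Pi.sub_apply, Pi.smul_apply, smul_eq_mul, Evec_succ_apply]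
    ring
end

section
/- (Theorem 2, part 2) The vector u_2 − exp(j·ε_rx,K)·u_3 belongs to the non-signal subspace of the noiseless auto-correlation matrix: R · (u_2 − exp(j·ε_rx,K)·u_3) = 0. -/
open scoped BigOperators

lemma aux_snoc (n : ℕ) (z : ℂ) (v : Fin (n + 1) → ℂ) :
    ∑ i : Fin (n + 2), z ^ (i : ℕ) * (Fin.snoc (α := fun _ => ℂ) v 0 i : ℂ) =
      ∑ i : Fin (n + 1), z ^ (i : ℕ) * v i := by
  rw [Fin.sum_univ_castSucc]
  simp

lemma aux_cons (n : ℕ) (z : ℂ) (v : Fin (n + 1) → ℂ) :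
    ∑ i : Fin (n + 2), z ^ (i : ℕ) * (Fin.cons (α := fun _ => ℂ) 0 v i : ℂ) =
      z * ∑ i : Fin (n + 1), z ^ (i : ℕ) * v i := by
  rw [Fin.sum_univ_succ, Finset.mul_sum]
  simp [pow_succ', mul_assoc]

lemma aux_Evec (z : ℂ) (m : ℕ) (η : Fin m → ℝ) :
    ∑ i : Fin (m + 1), z ^ (i : ℕ) * Evec m η i = ∏ k, (1 - Complex.exp (Complex.I * (η k : ℂ)) * z) := by
  induction m with
  | zero => simp [Evec]
  | succ m ih =>
    rw [Fin.prod_univ_castSucc, ← ih (fun k => η k.castSucc)]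
    simp only [Evec, mul_sub, Finset.sum_sub_distrib, aux_snoc, mul_left_comm (z ^ _),
      ← Finset.mul_sum, aux_cons]
    ring

lemma aux_L (n : ℕ) (η : Fin n → ℝ) :
    (Lmat (n + 1)).mulVec (Epad n η) = Fin.cons (α := fun _ => ℂ) 0 (Evec n η) := by
  funext i
  have h : (Lmat (n + 1)).mulVec (Epad n η) i = Epad n η (i - 1) := by
    simp [Lmat, Matrix.mulVec, dotProduct]
  rw [h]
  refine Fin.cases ?_ (fun k => ?_) i
  · have : (0 : Fin (n + 2)) - 1 = Fin.last (n + 1) := by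
      rw [sub_eq_iff_eq_add]; simp
    rw [this]; simp [Epad]
  · have : k.succ - 1 = k.castSucc := by
      rw [sub_eq_iff_eq_add]; simp
    rw [this]; simp [Epad]

lemma aux_steer (n : ℕ) (ε : ℝ) (i : Fin (n + 1)) :
    (starRingEnd ℂ) (steer n ε i) = Complex.exp (-(Complex.I * ε)) ^ (i : ℕ) := by
  rw [steer, ← Complex.exp_conj, ← Complex.exp_nat_mul]
  simp
  ring_nf

lemma aux_kron (n : ℕ) (a b : ℝ) (v w : Fin (n + 1) → ℂ) :
    ∑ q, (starRingEnd ℂ) (kron (steer n a) (steer n b) q) * kron v w q =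
      (∑ i : Fin (n + 1), Complex.exp (-(Complex.I * a)) ^ (i : ℕ) * v i) *
        ∑ i : Fin (n + 1), Complex.exp (-(Complex.I * b)) ^ (i : ℕ) * w i := by
  rw [Finset.sum_mul_sum, Fintype.sum_prod_type]
  refine Finset.sum_congr rfl fun i _ => Finset.sum_congr rfl fun l _ => ?_
  simp only [kron, map_mul, aux_steer]
  ring

lemma aux_key (Kp : ℕ) (εtx εrx : Fin (Kp + 1) → ℝ) (k : Fin (Kp + 1)) :
    ∑ q, (starRingEnd ℂ) (kron (steer (Kp + 1) (εtx k)) (steer (Kp + 1) (εrx k)) q) *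
      (u2 Kp (fun i => εtx i.castSucc) (fun i => εrx i.castSucc) - Complex.exp (Complex.I * (εrx (Fin.last Kp) : ℂ)) • u3 Kp (fun i => εtx i.castSucc) (fun i => εrx i.castSucc)) q = 0 := by
  simp only [Pi.sub_apply, Pi.smul_apply, smul_eq_mul, mul_sub, Finset.sum_sub_distrib,
    mul_left_comm _ (Complex.exp (Complex.I * (εrx (Fin.last Kp) : ℂ))), ← Finset.mul_sum]
  simp only [u2, u3, aux_kron, aux_L]
  simp only [Epad, aux_snoc, aux_cons, aux_Evec]
  refine Fin.lastCases ?_ (fun l => ?_) k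
  · have h : Complex.exp (Complex.I * (εrx (Fin.last Kp) : ℂ)) *
        Complex.exp (-(Complex.I * (εrx (Fin.last Kp) : ℂ))) = 1 := by
      rw [← Complex.exp_add]; simp
    generalize (∏ x : Fin Kp, (1 - Complex.exp (Complex.I * (εrx x.castSucc : ℂ)) *
      Complex.exp (-(Complex.I * (εrx (Fin.last Kp) : ℂ))))) = P
    generalize (∏ x : Fin Kp, (1 - Complex.exp (Complex.I * (εtx x.castSucc : ℂ)) *
      Complex.exp (-(Complex.I * (εtx (Fin.last Kp) : ℂ))))) = Q
    linear_combination (-(Complex.exp (-(Complex.I * (εtx (Fin.last Kp) : ℂ))) * Q * P)) * h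
  · have h : ∏ x : Fin Kp, (1 - Complex.exp (Complex.I * (εtx x.castSucc : ℂ)) *
        Complex.exp (-(Complex.I * (εtx l.castSucc : ℂ)))) = 0 := by
      refine Finset.prod_eq_zero (Finset.mem_univ l) ?_
      rw [← Complex.exp_add]; simp
    rw [h]; simp

/-- Theorem 2, part 2: R · (u_2 − exp(j·ε_rx,K)·u_3) = 0. -/
theorem statement7 (Kp : ℕ) (hKp : 1 ≤ Kp) (εtx εrx : Fin (Kp + 1) → ℝ)
    (σsq : Fin (Kp + 1) → ℝ) (hσ : ∀ k, 0 < σsq k) :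
    (Rmat (Kp + 1) εtx εrx σsq).mulVec
      (u2 Kp (fun i => εtx i.castSucc) (fun i => εrx i.castSucc) - Complex.exp (Complex.I * (εrx (Fin.last Kp) : ℂ)) • u3 Kp (fun i => εtx i.castSucc) (fun i => εrx i.castSucc)) = 0 := by
  funext p
  simp only [Matrix.mulVec, dotProduct, Rmat, Matrix.of_apply, Finset.sum_mul, Pi.zero_apply]
  rw [Finset.sum_comm]
  refine Finset.sum_eq_zero fun k _ => ?_
  simp only [mul_assoc, ← Finset.mul_sum]
  rw [aux_key]
  simp
end

section
/- (Lemma 3, equations (33) and d = a) For every real ε and all real estimates ε̂_1,…,ε̂_{K−1}: Ẽ^† R_ε Ẽ = 4^{K−1} · ∏_{ι=1}^{K−1} sin²((ε − ε̂_ι)/2) (in particular this quadratic form is real and nonnegative), and moreover Ẽ^† L^† R_ε L Ẽ = Ẽ^† R_ε Ẽ. -/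
open scoped BigOperators
open Matrix

theorem Evec_sum (m : ℕ) (η : Fin m → ℝ) (z : ℂ) :
    ∑ i, Evec m η i * z ^ (i : ℕ) = ∏ k, (1 - Complex.exp (Complex.I * (η k : ℂ)) * z) := by
  induction m with
  | zero => simp [Evec]
  | succ m ih =>
    rw [Fin.prod_univ_castSucc, ← ih (fun j => η j.castSucc)]
    simp only [Evec, sub_mul, Finset.sum_sub_distrib]
    rw [Fin.sum_univ_castSucc, Fin.sum_univ_succ (n := m + 1)
      (f := fun i => Complex.exp (Complex.I * (η (Fin.last m) : ℂ)) *
          Fin.cons (α := fun _ => ℂ) 0 (Evec m fun j => η j.castSucc) i * z ^ (i : ℕ))]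
    simp only [Fin.snoc_castSucc, Fin.snoc_last, Fin.cons_zero, Fin.cons_succ, Fin.val_castSucc,
      Fin.val_succ, zero_mul, mul_zero, add_zero, zero_add, mul_sub, mul_one, Finset.sum_mul]
    congr 1
    refine Finset.sum_congr rfl fun i _ => ?_
    ring

theorem Epad_sum (m : ℕ) (η : Fin m → ℝ) (z : ℂ) :
    ∑ i, Epad m η i * z ^ (i : ℕ) = ∏ k, (1 - Complex.exp (Complex.I * (η k : ℂ)) * z) := by
  rw [← Evec_sum, Fin.sum_univ_castSucc]
  simp [Epad]

theorem LEpad_sum (m : ℕ) (η : Fin m → ℝ) (z : ℂ) :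
    ∑ i, ((Lmat (m + 1)) *ᵥ (Epad m η)) i * z ^ (i : ℕ) =
      z * ∏ k, (1 - Complex.exp (Complex.I * (η k : ℂ)) * z) := by
  have h : ∀ i, ((Lmat (m + 1)) *ᵥ (Epad m η)) i = Epad m η (i - 1) := by
    intro i
    simp [Matrix.mulVec, dotProduct, Lmat]
  simp only [h]
  rw [← Evec_sum, Fin.sum_univ_succ]
  have h0 : (0 : Fin (m + 2)) - 1 = Fin.last (m + 1) := by
    rw [sub_eq_iff_eq_add]; simp
  have h1 : ∀ i : Fin (m + 1), i.succ - 1 = i.castSucc := by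
    intro i
    rw [sub_eq_iff_eq_add]; simp
  rw [h0]
  simp only [h1, Epad, Fin.snoc_castSucc, Fin.snoc_last, Fin.val_succ, zero_mul, zero_add,
    Finset.mul_sum]
  refine Finset.sum_congr rfl fun i _ => ?_
  ring

theorem steer_conj (n : ℕ) (ε : ℝ) (i : Fin (n + 1)) :
    (starRingEnd ℂ) (steer n ε i) = Complex.exp (-(Complex.I * (ε : ℂ))) ^ (i : ℕ) := by
  rw [steer, ← Complex.exp_conj, ← Complex.exp_nat_mul]
  congr 1
  simp
  ring

theorem qf_Rsingle (m : ℕ) (ε : ℝ) (x : Fin (m + 2) → ℂ) :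
    qf x (Rsingle m ε) x =
      ((Complex.normSq (∑ i, x i * Complex.exp (-(Complex.I * (ε : ℂ))) ^ (i : ℕ)) : ℝ) : ℂ) := by
  rw [Complex.normSq_eq_conj_mul_self]
  simp only [← steer_conj (m + 1) ε, map_sum, map_mul, Complex.conj_conj]
  rw [Finset.sum_mul_sum]
  simp only [qf, Rsingle, Matrix.of_apply]
  refine Finset.sum_congr rfl fun i _ => Finset.sum_congr rfl fun l _ => ?_
  ring

theorem qf_eq {n : Type*} [Fintype n] (x : n → ℂ) (M : Matrix n n ℂ) (y : n → ℂ) :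
    qf x M y = star x ⬝ᵥ (M *ᵥ y) := by
  simp [qf, dotProduct, Matrix.mulVec, Finset.mul_sum, mul_assoc]

theorem qf_conj {n : Type*} [Fintype n] (x : n → ℂ) (A M : Matrix n n ℂ) :
    qf x (Aᴴ * M * A) x = qf (A *ᵥ x) M (A *ᵥ x) := by
  rw [qf_eq, qf_eq, Matrix.star_mulVec, ← Matrix.mulVec_mulVec, ← Matrix.mulVec_mulVec,
    Matrix.dotProduct_mulVec]

theorem normSq_factor (a ε : ℝ) :
    Complex.normSq (1 - Complex.exp (Complex.I * (a : ℂ)) * Complex.exp (-(Complex.I * (ε : ℂ)))) =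
      4 * Real.sin ((ε - a) / 2) ^ 2 := by
  have e : Complex.exp (Complex.I * (a : ℂ)) * Complex.exp (-(Complex.I * (ε : ℂ))) =
      Complex.exp (((a - ε : ℝ) : ℂ) * Complex.I) := by
    rw [← Complex.exp_add]; congr 1; push_cast; ring
  rw [e, Complex.normSq_apply]
  simp only [Complex.sub_re, Complex.sub_im, Complex.one_re, Complex.one_im,
    Complex.exp_ofReal_mul_I_re, Complex.exp_ofReal_mul_I_im]
  have h1 : a - ε = -(2 * ((ε - a) / 2)) := by ring
  rw [h1, Real.cos_neg, Real.sin_neg, Real.cos_two_mul, Real.sin_two_mul]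
  have h2 := Real.sin_sq_add_cos_sq ((ε - a) / 2)
  generalize Real.sin ((ε - a) / 2) = s at *
  generalize Real.cos ((ε - a) / 2) = c at *
  have : c ^ 2 = 1 - s ^ 2 := by linarith
  linear_combination (4 * c ^ 2 - 4) * h2

/-- Lemma 3, eq. (33) and d = a: for every real ε and estimates ε̂_1,…,ε̂_{K−1},
Ẽ^† R_ε Ẽ = 4^{K−1} · ∏_ι sin²((ε − ε̂_ι)/2) (in particular real and nonnegative), and
Ẽ^† L^† R_ε L Ẽ = Ẽ^† R_ε Ẽ (here K = Kp + 1 ≥ 2). -/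
theorem statement16 (Kp : ℕ) (hKp : 1 ≤ Kp) (η : Fin Kp → ℝ) (ε : ℝ) :
    qf (Epad Kp η) (Rsingle Kp ε) (Epad Kp η) =
      (((4 : ℝ) ^ Kp * ∏ ι, Real.sin ((ε - η ι) / 2) ^ 2 : ℝ) : ℂ) ∧
    qf (Epad Kp η) ((Lmat (Kp + 1))ᴴ * Rsingle Kp ε * Lmat (Kp + 1)) (Epad Kp η) =
      qf (Epad Kp η) (Rsingle Kp ε) (Epad Kp η) := by
  rw [qf_conj, qf_Rsingle, qf_Rsingle, Epad_sum, LEpad_sum]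
  have hz : Complex.normSq (Complex.exp (-(Complex.I * (ε : ℂ)))) = 1 := by
    rw [Complex.normSq_eq_norm_sq, Complex.norm_exp]
    simp
  refine ⟨?_, ?_⟩
  · rw [map_prod]
    simp only [normSq_factor]
    rw [Finset.prod_mul_distrib]
    simp
  · rw [map_mul, hz, one_mul]
end
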